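/- Let G be a plane (planar embedded) graph whose outer boundary is a cycle, and let e = v₁v₂ be a boundary edge. Then there exists a matching M of G not covering v₁ or v₂, and an exponent function η with η(v₁) = η(v₂) = 0, η(v) ≤ 2 − d_M(v) for every other boundary vertex v, and η(v) ≤ 3 for every interior vertex v, such that the coefficient of x^η in the graph polynomial of G − e − M is nonzero. -/

import Mathlib

open MvPolynomial Finset

/- The graph polynomial `P_G = ∏_{uv ∈ E(G), u < v} (x_v - x_u)`. -/
open scoped Classical in
noncomputable def graphPoly {V : Type*} [Fintype V] [LinearOrder V]
    (G : SimpleGraph V) : MvPolynomial V ℝ :=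
  ∏ p ∈ Finset.univ.filter (fun p : V × V => G.Adj p.1 p.2 ∧ p.1 < p.2),
    (X p.2 - X p.1)

/- The signed graph polynomial `P_{G,σ} = ∏_{uv ∈ E(G), u < v} (x_v - σ(uv)·x_u)`. -/
open scoped Classical in
noncomputable def signedGraphPoly {V : Type*} [Fintype V] [LinearOrder V]
    (G : SimpleGraph V) (σ : Sym2 V → ℤ) : MvPolynomial V ℤ :=
  ∏ p ∈ Finset.univ.filter (fun p : V × V => G.Adj p.1 p.2 ∧ p.1 < p.2),
    (X p.2 - C (σ s(p.1, p.2)) * X p.1)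

/- `H` is a minor of `G`: branch sets. -/
def SimpleGraph.IsMinor {W V : Type*} (H : SimpleGraph W) (G : SimpleGraph V) : Prop :=
  ∃ f : W → Set V,
    (∀ w, (G.induce (f w)).Connected) ∧
    (∀ w₁ w₂, w₁ ≠ w₂ → Disjoint (f w₁) (f w₂)) ∧
    (∀ w₁ w₂, H.Adj w₁ w₂ → ∃ v₁ ∈ f w₁, ∃ v₂ ∈ f w₂, G.Adj v₁ v₂)

/- A graph is planar iff it has no `K₅` and no `K₃,₃` minor (Wagner's theorem). -/
def SimpleGraph.IsPlanar {V : Type*} (G : SimpleGraph V) : Prop :=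
  ¬ SimpleGraph.IsMinor (completeGraph (Fin 5)) G ∧
  ¬ SimpleGraph.IsMinor (completeBipartiteGraph (Fin 3) (Fin 3)) G


/- Add an apex vertex adjacent to all vertices of `B`; planarity of the result encodes
that all vertices of `B` lie on a common (outer) face of a plane embedding of `G`. -/
def addApex {V : Type*} (G : SimpleGraph V) (B : Set V) : SimpleGraph (Option V) :=
  SimpleGraph.fromRel (fun a b =>
    match a, b with
    | some u, some v => G.Adj u v
    | some u, none => u ∈ B
    | none, _ => False)

/-!
Delete an outer vertex `v`: this exposes its interior neighbours `U` and splits off the factors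
`x_v - x_u` of the graph polynomial. Taking `x_u` from the factors with `u ∈ U` costs one unit of
exponent at each vertex of `U`, which is allowed because these vertices were interior before. If
`v` has at most two outer neighbours and all of them are roots, the exponent zero at the roots
forces `x_v` from the remaining factors. If they are `w` and a root `r` and the product without
the factor for `r` has coefficient zero at the desired monomial, then the cancelling terms show
that in the polynomial of `G - v` a unit of exponent can be moved from `w` to some `j ∈ U`. The
gain at `w` pays for the factor `x_v - x_w`; if the exponent of `j` becomes too large, the edge
`vj` is added to the matching instead.

If no root can be deleted in this way, take `v` next to a root. If `v` and one of its outer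
neighbours `x` separate the graph, the two sides are glued along `vx`. Otherwise three outer
neighbours of `v` would be linked to each other after deleting `v`, and, together with `v` and the
outer face contracted to a vertex, would give a minor `K₅` or `K₃,₃`.
-/

section Coefficients

variable {σ R : Type*} [CommRing R]

/-- The exponent of the squarefree monomial `∏ u ∈ U, x_u`. -/
noncomputable def indicatorExponent (U : Finset σ) : σ →₀ ℕ :=
  ∑ u ∈ U, Finsupp.single u 1

lemma indicatorExponent_apply [DecidableEq σ] (U : Finset σ) (a : σ) :
    indicatorExponent U a = if a ∈ U then 1 else 0 := by
  simp [indicatorExponent, Finsupp.finsetSum_apply, Finsupp.single_apply]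

lemma indicatorExponent_insert [DecidableEq σ] {U : Finset σ} {j : σ} (hj : j ∉ U) :
    indicatorExponent (insert j U) = indicatorExponent U + Finsupp.single j 1 := by
  rw [indicatorExponent, Finset.sum_insert hj, add_comm, indicatorExponent]

lemma coeff_add_single_right_mul_X_sub_X (Q : MvPolynomial σ R) {η : σ →₀ ℕ} {v u : σ}
    (hne : v ≠ u) (hv : η v = 0) :
    coeff (η + Finsupp.single u 1) (Q * (X v - X u)) = -coeff η Q := by
  classical
  rw [mul_sub, coeff_sub, coeff_mul_X, coeff_mul_X', if_neg (by simp [hv, hne]), zero_sub]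

lemma coeff_add_single_left_mul_X_sub_X (Q : MvPolynomial σ R) {η : σ →₀ ℕ} {v u : σ}
    (hne : v ≠ u) (hu : η u = 0) :
    coeff (η + Finsupp.single v 1) (Q * (X v - X u)) = coeff η Q := by
  rw [← neg_sub, mul_neg, coeff_neg, coeff_add_single_right_mul_X_sub_X Q hne.symm hu, neg_neg]

lemma coeff_add_indicatorExponent_mul_prod (Q : MvPolynomial σ R) {η : σ →₀ ℕ} {v : σ}
    {U : Finset σ} (hvU : v ∉ U) (hv : η v = 0) :
    coeff (η + indicatorExponent U) (Q * ∏ u ∈ U, (X v - X u)) = (-1) ^ #U * coeff η Q := by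
  classical
  induction U using Finset.induction_on with
  | empty => simp [indicatorExponent]
  | insert j U hj ih =>
    obtain ⟨hvj, hvU⟩ : v ≠ j ∧ v ∉ U := by simpa [not_or] using hvU
    rw [indicatorExponent_insert hj, prod_insert hj, mul_comm (X v - X j), ← mul_assoc,
      ← add_assoc,
      coeff_add_single_right_mul_X_sub_X _ hvj (by simp [hv, indicatorExponent_apply, hvU]),
      ih hvU, card_insert_of_notMem hj]
    ring

lemma coeff_add_single_card_mul_prod (Q : MvPolynomial σ R) {η : σ →₀ ℕ} {v : σ} {U : Finset σ}
    (hvU : v ∉ U) (hU : ∀ u ∈ U, η u = 0) :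
    coeff (η + Finsupp.single v #U) (Q * ∏ u ∈ U, (X v - X u)) = coeff η Q := by
  classical
  induction U using Finset.induction_on with
  | empty => simp
  | insert j U hj ih =>
    obtain ⟨hvj, hvU⟩ : v ≠ j ∧ v ∉ U := by simpa [not_or] using hvU
    rw [card_insert_of_notMem hj, prod_insert hj, mul_comm (X v - X j), ← mul_assoc,
      Finsupp.single_add, ← add_assoc,
      coeff_add_single_left_mul_X_sub_X _ hvj (by simp [hU, hvj]),
      ih hvU fun u hu ↦ hU u (mem_insert_of_mem hu)]

lemma coeff_add_indicatorExponent_add_single_card_mul_prod [DecidableEq σ] (Q : MvPolynomial σ R)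
    {η : σ →₀ ℕ} {v : σ} {U N : Finset σ} (hUN : Disjoint U N) (hv : v ∉ U ∪ N) (hηv : η v = 0)
    (hηN : ∀ u ∈ N, η u = 0) :
    coeff (η + indicatorExponent U + Finsupp.single v #N) (Q * ∏ u ∈ U ∪ N, (X v - X u)) =
      (-1) ^ #U * coeff η Q := by
  obtain ⟨hvU, hvN⟩ : v ∉ U ∧ v ∉ N := by simpa [not_or] using hv
  have hη : ∀ u ∈ N, (η + indicatorExponent U) u = 0 := fun u hu ↦ by
    simp [hηN u hu, indicatorExponent_apply, disjoint_right.1 hUN hu]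
  rw [prod_union hUN, ← mul_assoc, coeff_add_single_card_mul_prod _ hvN hη,
    coeff_add_indicatorExponent_mul_prod Q hvU hηv]

/-- `x_v` has to be chosen from exactly one factor `x_v - x_j`. -/
lemma coeff_add_single_add_indicatorExponent_mul_prod {Q : MvPolynomial σ R} {θ : σ →₀ ℕ} {v : σ}
    {U : Finset σ} (hQ : v ∉ Q.vars) (hvU : v ∉ U) (hv : θ v = 0) :
    coeff (θ + Finsupp.single v 1 + indicatorExponent U) (Q * ∏ u ∈ U, (X v - X u)) =
      -(-1) ^ #U * ∑ j ∈ U, coeff (θ + Finsupp.single j 1) Q := by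
  classical
  induction U using Finset.induction_on with
  | empty =>
    have : coeff (θ + Finsupp.single v 1) Q = 0 := by
      by_contra h
      simpa using mem_support_notMem_vars_zero (mem_support_iff.2 h) hQ
    simpa [indicatorExponent] using this
  | insert j U hj ih =>
    obtain ⟨hvj, hvU⟩ : v ≠ j ∧ v ∉ U := by simpa [not_or] using hvU
    have expand (P : MvPolynomial σ R) :
        coeff (θ + Finsupp.single v 1 + indicatorExponent (insert j U)) (P * (X v - X j)) =
          coeff (θ + Finsupp.single j 1 + indicatorExponent U) P -
            coeff (θ + Finsupp.single v 1 + indicatorExponent U) P := by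
      rw [mul_sub, coeff_sub, indicatorExponent_insert hj, ← add_assoc, coeff_mul_X]
      rw [show θ + Finsupp.single v 1 + indicatorExponent U + Finsupp.single j 1 =
        θ + Finsupp.single j 1 + indicatorExponent U + Finsupp.single v 1 by abel, coeff_mul_X]
    rw [prod_insert hj, mul_comm (X v - X j), ← mul_assoc, expand, ih hvU,
      coeff_add_indicatorExponent_mul_prod Q hvU (by simp [hv, hvj.symm]), sum_insert hj,
      card_insert_of_notMem hj]
    ring

lemma exists_coeff_exchange_ne_zero [DecidableEq σ] {Q : MvPolynomial σ R} {η : σ →₀ ℕ} {v w : σ}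
    {U : Finset σ} (hQ : v ∉ Q.vars) (hvU : v ∉ insert w U) (hwU : w ∉ U) (hv : η v = 0)
    (hη : coeff η Q ≠ 0)
    (hzero : coeff (η + Finsupp.single v 1 + indicatorExponent U)
      (Q * ∏ u ∈ insert w U, (X v - X u)) = 0) :
    ∃ θ, η = θ + Finsupp.single w 1 ∧ ∃ j ∈ U, coeff (θ + Finsupp.single j 1) Q ≠ 0 := by
  obtain ⟨hvw, hvU'⟩ : v ≠ w ∧ v ∉ U := by simpa [not_or] using hvU
  rcases Nat.eq_zero_or_pos (η w) with hw | hw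
  · rw [prod_insert hwU, mul_comm (X v - X w), ← mul_assoc, add_right_comm,
      coeff_add_single_left_mul_X_sub_X _ hvw (by simp [hw, indicatorExponent_apply, hwU]),
      coeff_add_indicatorExponent_mul_prod Q hvU' hv] at hzero
    exact absurd ((isUnit_neg_one.pow _).mul_right_eq_zero.1 hzero) hη
  · obtain ⟨θ, rfl⟩ : ∃ θ, η = θ + Finsupp.single w 1 :=
      ⟨η - Finsupp.single w 1,
        (tsub_add_cancel_of_le (by simpa [Nat.one_le_iff_ne_zero] using hw.ne')).symm⟩
    refine ⟨θ, rfl, ?_⟩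
    have hθv : θ v = 0 := by simpa [hvw.symm] using hv
    rw [add_right_comm θ, add_assoc _ (Finsupp.single w 1), add_comm (Finsupp.single w 1),
      ← indicatorExponent_insert hwU, coeff_add_single_add_indicatorExponent_mul_prod hQ hvU hθv,
      neg_mul, neg_eq_zero, (isUnit_neg_one.pow _).mul_right_eq_zero, sum_insert hwU] at hzero
    by_contra! hU
    exact hη (by simpa [sum_eq_zero hU] using hzero)

lemma coeff_add_mul_of_isHomogeneous {F₁ F₂ : MvPolynomial σ R} {η₁ η₂ : σ →₀ ℕ} {d : ℕ}
    (hF₂ : F₂.IsHomogeneous d) (h₁ : coeff η₁ F₁ ≠ 0) (h₂ : coeff η₂ F₂ ≠ 0)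
    (h : ∀ u ∈ F₁.vars, η₂ u = 0) :
    coeff (η₁ + η₂) (F₁ * F₂) = coeff η₁ F₁ * coeff η₂ F₂ := by
  classical
  rw [coeff_mul]
  refine sum_eq_single_of_mem (η₁, η₂) (by simp) fun ⟨α, β⟩ hsum hne ↦ ?_
  rw [HasAntidiagonal.mem_antidiagonal] at hsum
  by_contra hαβ
  have hα : coeff α F₁ ≠ 0 := left_ne_zero_of_mul hαβ
  have hβ : coeff β F₂ ≠ 0 := right_ne_zero_of_mul hαβ
  have hle : η₂ ≤ β := fun u ↦ by
    by_cases hu : u ∈ F₁.vars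
    · simp [h u hu]
    · have hsum_u : α u + β u = η₁ u + η₂ u := DFunLike.congr_fun hsum u
      rw [mem_support_notMem_vars_zero (mem_support_iff.2 hα) hu,
        mem_support_notMem_vars_zero (mem_support_iff.2 h₁) hu] at hsum_u
      omega
  obtain ⟨γ, rfl⟩ := le_iff_exists_add.1 hle
  have hdeg : (η₂ + γ).degree = η₂.degree := by
    rw [not_imp_comm.1 hF₂.coeff_eq_zero hβ, not_imp_comm.1 hF₂.coeff_eq_zero h₂]
  obtain rfl : γ = 0 := by
    rw [← Finsupp.degree_eq_zero_iff]
    simpa using hdeg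
  have hα₁ : α = η₁ := by simpa using hsum
  exact hne (by rw [hα₁, add_zero])

lemma coeff_ne_zero_of_associated [IsReduced R] {p q : MvPolynomial σ R} (h : Associated p q)
    {η : σ →₀ ℕ} (hp : coeff η p ≠ 0) : coeff η q ≠ 0 := by
  obtain ⟨u, rfl⟩ := h
  obtain ⟨r, hr, hu⟩ := isUnit_iff_eq_C_of_isReduced.1 u.isUnit
  rw [hu, mul_comm, coeff_C_mul]
  exact fun h ↦ hp (hr.mul_right_eq_zero.1 h)

end Coefficients

section GraphPolynomial

variable {V : Type*} [Fintype V] [LinearOrder V]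

lemma isHomogeneous_graphPoly (K : SimpleGraph V) : ∃ d, (graphPoly K).IsHomogeneous d :=
  ⟨_, IsHomogeneous.prod _ _ (fun _ ↦ 1) fun _ _ ↦ (isHomogeneous_X _ _).sub (isHomogeneous_X _ _)⟩

lemma mem_support_of_mem_vars_graphPoly {K : SimpleGraph V} {u : V} (hu : u ∈ (graphPoly K).vars) :
    u ∈ K.support := by
  classical
  obtain ⟨p, hp, hup⟩ := mem_biUnion.1 (vars_prod _ hu)
  have hK : K.Adj p.1 p.2 := (mem_filter.1 hp).2.1
  rcases mem_union.1 (vars_sub_subset _ hup) with h | h <;>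
    rw [vars_X, mem_singleton] at h <;> subst h
  exacts [⟨_, hK.symm⟩, ⟨_, hK⟩]

lemma eq_zero_of_coeff_graphPoly_ne_zero {K : SimpleGraph V} {η : V →₀ ℕ}
    (hη : coeff η (graphPoly K) ≠ 0) {u : V} (hu : u ∉ K.support) : η u = 0 :=
  mem_support_notMem_vars_zero (mem_support_iff.2 hη) (mt mem_support_of_mem_vars_graphPoly hu)

lemma graphPoly_sup {K L : SimpleGraph V} (h : Disjoint K L) :
    graphPoly (K ⊔ L) = graphPoly K * graphPoly L := by
  classical
  unfold graphPoly
  rw [← prod_union]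
  · congr 1
    ext p
    simp [or_and_right]
  · refine disjoint_filter.2 fun p _ hK hL ↦ ?_
    exact SimpleGraph.disjoint_left.1 h _ _ hK.1 hL.1

lemma associated_graphPoly_edge {v u : V} (hne : v ≠ u) :
    Associated (graphPoly (SimpleGraph.edge v u)) (X v - X u) := by
  have graphPoly_edge_of_lt {a b : V} (hab : a < b) :
      graphPoly (SimpleGraph.edge a b) = X b - X a := by
    have : ∀ p : V × V, ((SimpleGraph.edge a b).Adj p.1 p.2 ∧ p.1 < p.2) ↔ p = (a, b) := by
      rintro ⟨x, y⟩
      simp only [SimpleGraph.edge_adj, Prod.mk.injEq]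
      grind
    simp [graphPoly, this, filter_eq']
  rcases hne.lt_or_gt with h | h
  · rw [graphPoly_edge_of_lt h, ← neg_sub]
    exact (Associated.refl _).neg_left
  · rw [SimpleGraph.edge_comm, graphPoly_edge_of_lt h]

lemma associated_graphPoly_sup_edges {K : SimpleGraph V} {v : V} {U : Finset V}
    (hv : v ∉ U) (hK : ∀ u ∈ U, ¬K.Adj v u) :
    Associated (graphPoly (K ⊔ U.sup (SimpleGraph.edge v)))
      (graphPoly K * ∏ u ∈ U, (X v - X u)) := by
  induction U using Finset.induction_on with
  | empty => simp
  | insert j U hj ih =>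
    obtain ⟨hvj, hvU⟩ : v ≠ j ∧ v ∉ U := by simpa [not_or] using hv
    have hdisj : Disjoint (K ⊔ U.sup (SimpleGraph.edge v)) (SimpleGraph.edge v j) := by
      simp only [SimpleGraph.disjoint_left, SimpleGraph.sup_adj, Finset.sup_eq_iSup,
        SimpleGraph.iSup_adj, SimpleGraph.edge_adj]
      grind [SimpleGraph.Adj.symm]
    rw [sup_insert, sup_comm (SimpleGraph.edge v j), ← sup_assoc, graphPoly_sup hdisj,
      prod_insert hj, mul_comm (X v - X j), ← mul_assoc]
    exact (ih hvU fun u hu ↦ hK u (mem_insert_of_mem hu)).mul_mul (associated_graphPoly_edge hvj)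

lemma associated_graphPoly_deleteIncidenceSet (K : SimpleGraph V) (v : V)
    [Fintype (K.neighborSet v)] :
    Associated (graphPoly K)
      (graphPoly (K.deleteIncidenceSet v) * ∏ u ∈ K.neighborFinset v, (X v - X u)) := by
  have hK : K.deleteIncidenceSet v ⊔ (K.neighborFinset v).sup (SimpleGraph.edge v) = K := by
    ext a b
    rw [SimpleGraph.sup_adj, SimpleGraph.deleteIncidenceSet_adj, Finset.sup_eq_iSup]
    simp only [SimpleGraph.iSup_adj, SimpleGraph.edge_adj, SimpleGraph.mem_neighborFinset]
    grind [SimpleGraph.Adj.symm, SimpleGraph.Adj.ne]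
  nth_rewrite 1 [← hK]
  exact associated_graphPoly_sup_edges (by simp) (by simp [SimpleGraph.deleteIncidenceSet_adj])

end GraphPolynomial

section Minors

variable {W : Type*} {H : SimpleGraph W}

/-- Two vertex sets are adjacent in `H` when some edge of `H` joins them. -/
def SetAdj (H : SimpleGraph W) (s t : Set W) : Prop :=
  ∃ p ∈ s, ∃ q ∈ t, H.Adj p q

lemma SetAdj.symm {s t : Set W} (h : SetAdj H s t) : SetAdj H t s :=
  let ⟨p, hp, q, hq, hpq⟩ := h
  ⟨q, hq, p, hp, hpq.symm⟩

instance : Std.Symm (SetAdj H) := ⟨fun _ _ ↦ SetAdj.symm⟩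

lemma SetAdj.mono {s t s' t' : Set W} (h : SetAdj H s t) (hs : s ⊆ s') (ht : t ⊆ t') :
    SetAdj H s' t' :=
  let ⟨p, hp, q, hq, hpq⟩ := h
  ⟨p, hs hp, q, ht hq, hpq⟩

lemma setAdj_singleton {x y : W} : SetAdj H {x} {y} ↔ H.Adj x y := by
  simp [SetAdj]

lemma connected_induce_singleton (x : W) : (H.induce {x}).Connected := by
  rw [SimpleGraph.induce_singleton_eq_top]
  exact SimpleGraph.connected_top

lemma forall_vecCons {α : Type*} {P : α → Prop} {n : ℕ} {a : α} {f : Fin n → α} :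
    (∀ i, P (Matrix.vecCons a f i)) ↔ P a ∧ ∀ i, P (f i) :=
  Fin.forall_fin_succ

lemma pairwise_on_vecCons {α : Type*} {r : α → α → Prop} [Std.Symm r] {n : ℕ} {a : α}
    {f : Fin n → α} :
    Pairwise (Function.onFun r (Matrix.vecCons a f)) ↔
      (∀ i, r a (f i)) ∧ Pairwise (Function.onFun r f) := by
  have : Std.Symm (Function.onFun r (Matrix.vecCons a f)) := ⟨fun _ _ ↦ Std.Symm.symm (r := r) _ _⟩
  rw [pairwise_fin_succ_iff_of_isSymm]
  rfl

lemma isMinor_completeBipartiteGraph {α β : Type*} {f : α → Set W} {g : β → Set W}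
    (hf : ∀ a, (H.induce (f a)).Connected) (hg : ∀ b, (H.induce (g b)).Connected)
    (hff : Pairwise (Function.onFun Disjoint f)) (hgg : Pairwise (Function.onFun Disjoint g))
    (hfg : ∀ a b, Disjoint (f a) (g b)) (hadj : ∀ a b, SetAdj H (f a) (g b)) :
    SimpleGraph.IsMinor (completeBipartiteGraph α β) H := by
  refine ⟨Sum.elim f g, Sum.rec hf hg, ?_, ?_⟩
  · rintro (a | a) (b | b) hab
    exacts [hff (ne_of_apply_ne _ hab), hfg a b, (hfg b a).symm, hgg (ne_of_apply_ne _ hab)]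
  · rintro (a | a) (b | b) hab
    exacts [by simp at hab, hadj a b, (hadj b a).symm, by simp at hab]

lemma exists_isPath_of_preconnected_induce {U : Set W} {x z : W} (hU : (H.induce U).Preconnected)
    (hx : x ∈ U) (hz : z ∈ U) : ∃ p : H.Walk x z, p.IsPath ∧ ∀ a ∈ p.support, a ∈ U := by
  obtain ⟨q, hq⟩ := (hU ⟨x, hx⟩ ⟨z, hz⟩).exists_isPath
  have hqU : ∀ a ∈ (q.map (SimpleGraph.Embedding.induce U).toHom).support, a ∈ U := by
    simp only [SimpleGraph.Walk.support_map, List.mem_map]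
    rintro _ ⟨a, -, rfl⟩
    exact a.2
  exact ⟨_, hq.map Subtype.val_injective, hqU⟩

lemma adj_or_exists_connecting_set {U : Set W} {x z : W} (hU : (H.induce U).Preconnected)
    (hx : x ∈ U) (hz : z ∈ U) (hne : x ≠ z) :
    H.Adj x z ∨ ∃ E ⊆ U \ {x, z},
      (H.induce E).Connected ∧ SetAdj H E {x} ∧ SetAdj H E {z} := by
  obtain ⟨p, hp, hpU⟩ := exists_isPath_of_preconnected_induce hU hx hz
  have hpnil : ¬p.Nil := SimpleGraph.Walk.not_nil_of_ne hne
  by_cases hpz : p.snd = z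
  · exact .inl (hpz ▸ p.adj_snd hpnil)
  have htail : ¬p.tail.Nil := SimpleGraph.Walk.not_nil_of_ne hpz
  have hsupp : p.support = x :: (p.tail.dropLast.support ++ [z]) := by
    rw [SimpleGraph.Walk.support_dropLast_concat htail, SimpleGraph.Walk.cons_support_tail hpnil]
  have hnodup : (x :: (p.tail.dropLast.support ++ [z])).Nodup := hsupp ▸ hp.support_nodup
  refine .inr ⟨{a | a ∈ p.tail.dropLast.support}, fun a ha ↦ ⟨hpU a ?_, ?_⟩,
    p.tail.dropLast.connected_induce_support, ?_, ?_⟩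
  · rw [hsupp]
    simp [Set.mem_ofPred.1 ha]
  · grind
  · exact ⟨p.snd, p.tail.dropLast.start_mem_support, x, rfl, (p.adj_snd hpnil).symm⟩
  · exact ⟨_, p.tail.dropLast.end_mem_support, z, rfl, p.tail.adj_penultimate htail⟩

lemma exists_connecting_set {U : Set W} {x z : W} (hU : (H.induce U).Preconnected)
    (hx : x ∈ U) (hz : z ∈ U) (hne : x ≠ z) :
    ∃ E ⊆ U \ {x, z}, (H.induce (insert x E)).Connected ∧ SetAdj H (insert x E) {z} ∧
      (E.Nonempty → (H.induce E).Connected ∧ SetAdj H E {x} ∧ SetAdj H E {z}) := by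
  rcases adj_or_exists_connecting_set hU hx hz hne with hxz | ⟨E, hEU, hE, hEx, hEz⟩
  · refine ⟨∅, Set.empty_subset _, ?_, ?_, by simp⟩
    · rw [insert_empty_eq]
      exact connected_induce_singleton x
    · rw [insert_empty_eq]
      exact setAdj_singleton.2 hxz
  · obtain ⟨e, he, y, hy, hex⟩ := hEx
    obtain rfl : x = y := hy.symm
    exact ⟨E, hEU, SimpleGraph.connected_induce_union (connected_induce_singleton x).preconnected
      hE.preconnected (Set.mem_singleton _) he hex.symm,
      hEz.mono (Set.subset_insert _ _) subset_rfl,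
      fun _ ↦ ⟨hE, ⟨e, he, x, rfl, hex⟩, hEz⟩⟩

lemma exists_rooted_claw_or_triangle {T : Set W} {x : Fin 3 → W} (hx : Function.Injective x)
    (hxT : ∀ i, x i ∈ T) (hT : ∀ i, (H.induce (T \ {x i})).Preconnected) :
    (∃ D ⊆ T \ Set.range x, (H.induce D).Connected ∧ ∀ i, SetAdj H D {x i}) ∨
      ∃ Y : Fin 3 → Set W, (∀ i, x i ∈ Y i ∧ Y i ⊆ T ∧ (H.induce (Y i)).Connected) ∧
        Pairwise (Function.onFun Disjoint Y) ∧ Pairwise (Function.onFun (SetAdj H) Y) := by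
  have exists_path (i : Fin 3) : ∃ E ⊆ T \ Set.range x, (H.induce (insert (x i) E)).Connected ∧
      SetAdj H (insert (x i) E) {x (i + 1)} ∧
      (E.Nonempty → (H.induce E).Connected ∧ SetAdj H E {x i} ∧ SetAdj H E {x (i + 1)}) := by
    obtain ⟨E, hE, h⟩ := exists_connecting_set (hT (i + 2)) (x := x i) (z := x (i + 1))
      ⟨hxT _, hx.ne (by grind)⟩ ⟨hxT _, hx.ne (by grind)⟩ (hx.ne (by grind))
    refine ⟨E, hE.trans ?_, h⟩
    rintro a ⟨⟨haT, ha⟩, ha'⟩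
    refine ⟨haT, ?_⟩
    rintro ⟨j, rfl⟩
    have : j = i ∨ j = i + 1 ∨ j = i + 2 := by grind
    rcases this with rfl | rfl | rfl <;> simp at ha ha'
  choose E hET hconn hadj hE using exists_path
  by_cases hdisj : Pairwise (Function.onFun Disjoint E)
  · refine .inr ⟨fun i ↦ insert (x i) (E i), fun i ↦ ⟨Set.mem_insert _ _, ?_, hconn i⟩, ?_, ?_⟩
    · exact Set.insert_subset (hxT i) ((hET i).trans Set.sdiff_subset)
    · intro i j hij
      have hxE (i j : Fin 3) : x i ∉ E j := fun h ↦ (hET j h).2 ⟨i, rfl⟩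
      simp [Function.onFun, hx.ne hij.symm, hxE, hdisj hij]
    · have hnext (i : Fin 3) : SetAdj H (insert (x i) (E i)) (insert (x (i + 1)) (E (i + 1))) :=
        (hadj i).mono subset_rfl (by simp)
      intro i j hij
      have : j = i + 1 ∨ i = j + 1 := by grind
      rcases this with rfl | rfl
      exacts [hnext i, (hnext j).symm]
  · obtain ⟨i, j, hij, hmeet⟩ : ∃ i j, i ≠ j ∧ ¬Disjoint (E i) (E j) := by
      simpa [Pairwise, Function.onFun] using hdisj
    rw [Set.not_disjoint_iff_nonempty_inter] at hmeet
    obtain ⟨hi, hi₀, hi₁⟩ := hE i hmeet.left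
    obtain ⟨hj, hj₀, hj₁⟩ := hE j hmeet.right
    refine .inl ⟨E i ∪ E j, Set.union_subset (hET i) (hET j),
      SimpleGraph.induce_union_connected hi.preconnected hj.preconnected hmeet, fun k ↦ ?_⟩
    have : k = i ∨ k = i + 1 ∨ k = j ∨ k = j + 1 := by grind
    rcases this with rfl | rfl | rfl | rfl
    exacts [hi₀.mono Set.subset_union_left subset_rfl, hi₁.mono Set.subset_union_left subset_rfl,
      hj₀.mono Set.subset_union_right subset_rfl, hj₁.mono Set.subset_union_right subset_rfl]

lemma not_isPlanar_of_common_neighbors {A₁ A₂ T : Set W} {x : Fin 3 → W}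
    (hx : Function.Injective x) (hxT : ∀ i, x i ∈ T)
    (hT : ∀ i, (H.induce (T \ {x i})).Preconnected)
    (hA₁ : (H.induce A₁).Connected) (hA₂ : (H.induce A₂).Connected)
    (hA : Disjoint A₁ A₂) (hA₁T : Disjoint A₁ T) (hA₂T : Disjoint A₂ T)
    (hadj : SetAdj H A₁ A₂) (hadj₁ : ∀ i, SetAdj H A₁ {x i}) (hadj₂ : ∀ i, SetAdj H A₂ {x i}) :
    ¬H.IsPlanar := by
  rintro ⟨hK₅, hK₃₃⟩
  rcases exists_rooted_claw_or_triangle hx hxT hT with ⟨D, hDT, hD, hDx⟩ | ⟨Y, hY, hYdisj, hYadj⟩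
  · have hDT' : D ⊆ T := hDT.trans Set.sdiff_subset
    have hxD (i) : x i ∉ D := fun h ↦ (hDT h).2 ⟨i, rfl⟩
    have hxT' (i) : {x i} ⊆ T := Set.singleton_subset_iff.2 (hxT i)
    refine hK₃₃ (isMinor_completeBipartiteGraph (f := ![A₁, A₂, D]) (g := fun i ↦ {x i})
      ?_ (fun i ↦ connected_induce_singleton _) ?_ ?_ ?_ ?_)
    · simp [forall_vecCons (P := fun s ↦ (H.induce s).Connected), hA₁, hA₂, hD]
    · simp [pairwise_on_vecCons, forall_vecCons, hA, hA₁T.mono_right hDT',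
        hA₂T.mono_right hDT', Subsingleton.pairwise]
    · exact fun i j hij ↦ Set.disjoint_singleton.2 (hx.ne hij)
    · simp only [forall_vecCons (P := fun s ↦ ∀ i, Disjoint s {x i})]
      exact ⟨fun i ↦ hA₁T.mono_right (hxT' i), fun i ↦ hA₂T.mono_right (hxT' i),
        fun i ↦ Set.disjoint_singleton_right.2 (hxD i), by simp⟩
    · simp [forall_vecCons (P := fun s ↦ ∀ i, SetAdj H s {x i}), hadj₁, hadj₂, hDx]
  · have hxY (i) : {x i} ⊆ Y i := Set.singleton_subset_iff.2 (hY i).1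
    refine hK₅ ⟨Matrix.vecCons A₁ (Matrix.vecCons A₂ Y), ?_, ?_, ?_⟩
    · simp only [forall_vecCons (P := fun s ↦ (H.induce s).Connected)]
      exact ⟨hA₁, hA₂, fun i ↦ (hY i).2.2⟩
    · exact pairwise_on_vecCons.2 ⟨forall_vecCons.2 ⟨hA, fun i ↦ hA₁T.mono_right (hY i).2.1⟩,
        pairwise_on_vecCons.2 ⟨fun i ↦ hA₂T.mono_right (hY i).2.1, hYdisj⟩⟩
    · have hpairwise : Pairwise (Function.onFun (SetAdj H)
          (Matrix.vecCons A₁ (Matrix.vecCons A₂ Y))) :=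
        pairwise_on_vecCons.2 ⟨forall_vecCons.2 ⟨hadj, fun i ↦ (hadj₁ i).mono subset_rfl (hxY i)⟩,
          pairwise_on_vecCons.2 ⟨fun i ↦ (hadj₂ i).mono subset_rfl (hxY i), hYadj⟩⟩
      exact fun i j hij ↦ hpairwise hij.ne

end Minors

section NicePairs

variable {V : Type*} {G : SimpleGraph V} {S B R : Set V} {v : V} {M : G.Subgraph}

/-- The graph `G[S]` without the edges inside `R` and without the edges of `M`. -/
def reducedGraph (G : SimpleGraph V) (S R : Set V) (M : G.Subgraph) : SimpleGraph V where
  Adj u w := G.Adj u w ∧ u ∈ S ∧ w ∈ S ∧ ¬(u ∈ R ∧ w ∈ R) ∧ ¬M.Adj u w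
  symm := ⟨fun _ _ ↦ by grind [SimpleGraph.Adj.symm, SimpleGraph.Subgraph.Adj.symm]⟩
  loopless := ⟨fun _ h ↦ h.1.ne rfl⟩

lemma support_reducedGraph_subset : (reducedGraph G S R M).support ⊆ S :=
  fun _ ⟨_, h⟩ ↦ h.2.1

/-- The outer vertices of `G[S \ {v}]`, when `B` are the outer vertices of `G[S]` and the outer
vertex `v` is deleted: the neighbours of `v` become visible from the outer face. -/
def peel (G : SimpleGraph V) (S B : Set V) (v : V) : Set V :=
  (B ∪ S ∩ G.neighborSet v) \ {v}

variable [Fintype V]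

open scoped Classical in
/-- The neighbours in `S` of the outer vertex `v` that do not lie on the outer face. -/
noncomputable def interiorNeighbors (G : SimpleGraph V) (S B : Set V) (v : V) : Finset V :=
  {u | G.Adj v u ∧ u ∈ S ∧ u ∉ B}

open scoped Classical in
/-- The outer vertices joined to `v` by an edge that does not lie inside the root set `R`. -/
noncomputable def boundaryNeighbors (G : SimpleGraph V) (B R : Set V) (v : V) : Finset V :=
  {u | G.Adj v u ∧ u ∈ B ∧ ¬(v ∈ R ∧ u ∈ R)}

lemma mem_interiorNeighbors {u : V} :
    u ∈ interiorNeighbors G S B v ↔ G.Adj v u ∧ u ∈ S ∧ u ∉ B := by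
  simp [interiorNeighbors]

lemma mem_boundaryNeighbors {u : V} :
    u ∈ boundaryNeighbors G B R v ↔ G.Adj v u ∧ u ∈ B ∧ ¬(v ∈ R ∧ u ∈ R) := by
  simp [boundaryNeighbors]

lemma mem_peel_of_mem_interiorNeighbors {u : V} (hu : u ∈ interiorNeighbors G S B v) :
    u ∈ peel G S B v :=
  let ⟨hvu, huS, _⟩ := mem_interiorNeighbors.1 hu
  ⟨.inr ⟨huS, hvu⟩, hvu.ne'⟩

lemma disjoint_interiorNeighbors_boundaryNeighbors :
    Disjoint (interiorNeighbors G S B v) (boundaryNeighbors G B R v) :=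
  disjoint_left.2 fun _ hU hN ↦
    (mem_interiorNeighbors.1 hU).2.2 (mem_boundaryNeighbors.1 hN).2.1

lemma notMem_interiorNeighbors_union_boundaryNeighbors [DecidableEq V] :
    v ∉ interiorNeighbors G S B v ∪ boundaryNeighbors G B R v := by
  simp [mem_interiorNeighbors, mem_boundaryNeighbors]

lemma reducedGraph_adj_iff_mem [DecidableEq V] (hv : v ∈ B) (hRB : R ⊆ B) (hBS : B ⊆ S)
    (hvM : v ∉ M.verts) {u : V} :
    (reducedGraph G S R M).Adj v u ↔
      u ∈ interiorNeighbors G S B v ∪ boundaryNeighbors G B R v := by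
  have hvu : ¬M.Adj v u := fun hvu ↦ hvM hvu.fst_mem
  simp only [reducedGraph, mem_union, mem_interiorNeighbors, mem_boundaryNeighbors]
  grind

lemma reducedGraph_sup_subgraphOfAdj_adj_iff_mem [DecidableEq V] (hv : v ∈ B) (hRB : R ⊆ B)
    (hBS : B ⊆ S) (hvM : v ∉ M.verts) {j : V} (hvj : G.Adj v j) {u : V} :
    (reducedGraph G S R (M ⊔ G.subgraphOfAdj hvj)).Adj v u ↔
      u ∈ (interiorNeighbors G S B v ∪ boundaryNeighbors G B R v).erase j := by
  rw [mem_erase, ← reducedGraph_adj_iff_mem hv hRB hBS hvM]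
  simp only [reducedGraph, SimpleGraph.Subgraph.sup_adj, SimpleGraph.subgraphOfAdj_adj]
  grind

variable [LinearOrder V] {η : V →₀ ℕ}

/-- The matching `M` and the exponent `η` of the theorem for the graph `G[S]` with set of outer
vertices `B`, except that in place of the ends of a single edge a set `R` of roots gets exponent
zero and stays uncovered, with all edges inside `R` deleted. -/
structure IsNice (G : SimpleGraph V) (S B R : Set V) (M : G.Subgraph) (η : V →₀ ℕ) : Prop where
  isMatching : M.IsMatching
  verts_subset : M.verts ⊆ S \ R
  eq_zero : ∀ u ∈ R, η u = 0
  le_one : ∀ u ∈ B, u ∈ M.verts → η u ≤ 1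
  le_two : ∀ u ∈ B, η u ≤ 2
  le_three : ∀ u, η u ≤ 3
  coeff_ne_zero : coeff η (graphPoly (reducedGraph G S R M)) ≠ 0

lemma IsNice.eq_zero_of_notMem (h : IsNice G S B R M η) {u : V} (hu : u ∉ S) : η u = 0 :=
  eq_zero_of_coeff_graphPoly_ne_zero h.coeff_ne_zero
    (mt (fun h ↦ support_reducedGraph_subset h) hu)

lemma IsNice.of_singleton_root {r : V} (h : IsNice G S B {r} M η) {B' : Set V} (hB : B' ⊆ B) :
    IsNice G S B' ∅ M η where
  isMatching := h.isMatching
  verts_subset := h.verts_subset.trans (Set.sdiff_subset_sdiff_right (Set.empty_subset _))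
  eq_zero := by simp
  le_one u hu := h.le_one u (hB hu)
  le_two u hu := h.le_two u (hB hu)
  le_three := h.le_three
  coeff_ne_zero := by
    convert h.coeff_ne_zero using 3
    ext a b
    simp only [reducedGraph]
    grind [SimpleGraph.Adj.ne]

lemma associated_graphPoly_reducedGraph {M' : G.Subgraph} {T : Finset V}
    (hM : ∀ a b, a ≠ v → b ≠ v → (M'.Adj a b ↔ M.Adj a b))
    (hT : ∀ u, (reducedGraph G S R M').Adj v u ↔ u ∈ T) :
    Associated (graphPoly (reducedGraph G (S \ {v}) (R \ {v}) M) * ∏ u ∈ T, (X v - X u))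
      (graphPoly (reducedGraph G S R M')) := by
  classical
  convert (associated_graphPoly_deleteIncidenceSet (reducedGraph G S R M') v).symm using 4
  · ext a b
    rw [SimpleGraph.deleteIncidenceSet_adj]
    simp only [reducedGraph, Set.mem_sdiff, Set.mem_singleton_iff]
    grind
  · ext u
    simp [hT]

/-- Deleting the outer vertex `v` splits off the factors `x_v - x_u` at `v`. -/
lemma IsNice.of_coeff_mul_prod_ne_zero
    (h : IsNice G (S \ {v}) (peel G S B v) (R \ {v}) M η) (hv : v ∈ B) (hRB : R ⊆ B) (hBS : B ⊆ S)
    {η' : V →₀ ℕ} (hη'v : η' v ≤ 2) (hη'R : v ∈ R → η' v = 0)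
    (hη'B : ∀ u ∈ B, u ≠ v → η' u ≤ η u) (hη' : ∀ u ∉ B, η' u ≤ 3)
    (hcoeff : coeff η' (graphPoly (reducedGraph G (S \ {v}) (R \ {v}) M) *
      ∏ u ∈ interiorNeighbors G S B v ∪ boundaryNeighbors G B R v, (X v - X u)) ≠ 0) :
    IsNice G S B R M η' := by
  have hvM : v ∉ M.verts := fun hvM ↦ (h.verts_subset hvM).1.2 rfl
  have hpeel {u : V} (hu : u ∈ B) (huv : u ≠ v) : u ∈ peel G S B v := ⟨.inl hu, huv⟩
  refine ⟨h.isMatching, fun u hu ↦ ⟨(h.verts_subset hu).1.1, ?_⟩, fun u hu ↦ ?_, fun u hu huM ↦ ?_,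
    fun u hu ↦ ?_, fun u ↦ ?_, coeff_ne_zero_of_associated
      (associated_graphPoly_reducedGraph (fun _ _ _ _ ↦ Iff.rfl) fun u ↦ ?_) hcoeff⟩
  · exact fun huR ↦ (h.verts_subset hu).2 ⟨huR, fun huv ↦ hvM (huv ▸ hu)⟩
  · by_cases huv : u = v
    · exact huv ▸ hη'R (huv ▸ hu)
    · exact Nat.eq_zero_of_le_zero (h.eq_zero u ⟨hu, huv⟩ ▸ hη'B u (hRB hu) huv)
  · have huv : u ≠ v := fun huv ↦ hvM (huv ▸ huM)
    exact (hη'B u hu huv).trans (h.le_one u (hpeel hu huv) huM)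
  · by_cases huv : u = v
    · exact huv ▸ hη'v
    · exact (hη'B u hu huv).trans (h.le_two u (hpeel hu huv))
  · by_cases huB : u ∈ B
    · by_cases huv : u = v
      · exact huv ▸ hη'v.trans (by norm_num)
      · exact (hη'B u huB huv).trans (h.le_three u)
    · exact hη' u huB
  · exact reducedGraph_adj_iff_mem hv hRB hBS hvM

lemma IsNice.of_coeff_add_indicatorExponent_add_single_ne_zero
    (h : IsNice G (S \ {v}) (peel G S B v) (R \ {v}) M η) (hv : v ∈ B) (hRB : R ⊆ B) (hBS : B ⊆ S)
    {k : ℕ} (hk : k ≤ 2) (hkR : v ∈ R → k = 0)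
    (hcoeff : coeff (η + indicatorExponent (interiorNeighbors G S B v) + Finsupp.single v k)
      (graphPoly (reducedGraph G (S \ {v}) (R \ {v}) M) *
        ∏ u ∈ interiorNeighbors G S B v ∪ boundaryNeighbors G B R v, (X v - X u)) ≠ 0) :
    IsNice G S B R M
      (η + indicatorExponent (interiorNeighbors G S B v) + Finsupp.single v k) := by
  have hηv : η v = 0 := h.eq_zero_of_notMem (by simp)
  have hvU : v ∉ interiorNeighbors G S B v := by simp [mem_interiorNeighbors]
  refine h.of_coeff_mul_prod_ne_zero hv hRB hBS ?_ ?_ ?_ ?_ hcoeff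
  · simpa [hηv, indicatorExponent_apply, hvU]
  · intro hvR
    simp [hηv, indicatorExponent_apply, hvU, hkR hvR]
  · intro u hu huv
    have huU : u ∉ interiorNeighbors G S B v := fun h ↦ (mem_interiorNeighbors.1 h).2.2 hu
    simp [indicatorExponent_apply, huU, huv]
  · intro u hu
    have huv : u ≠ v := fun huv ↦ hu (huv ▸ hv)
    by_cases huU : u ∈ interiorNeighbors G S B v
    · simpa [indicatorExponent_apply, huU, huv] using
        Nat.lt_succ_of_le (h.le_two u (mem_peel_of_mem_interiorNeighbors huU))
    · simpa [indicatorExponent_apply, huU, huv] using h.le_three u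

lemma IsNice.exists_of_boundaryNeighbors_subset
    (h : IsNice G (S \ {v}) (peel G S B v) (R \ {v}) M η) (hv : v ∈ B) (hRB : R ⊆ B) (hBS : B ⊆ S)
    (hcard : #(boundaryNeighbors G B R v) ≤ 2) (hNR : ↑(boundaryNeighbors G B R v) ⊆ R) :
    ∃ η', IsNice G S B R M η' := by
  have hηN : ∀ u ∈ boundaryNeighbors G B R v, η u = 0 := fun u hu ↦
    h.eq_zero u ⟨hNR hu, (mem_boundaryNeighbors.1 hu).1.ne'⟩
  refine ⟨_, h.of_coeff_add_indicatorExponent_add_single_ne_zero hv hRB hBS hcard ?_ ?_⟩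
  · exact fun hvR ↦ card_eq_zero.2 <| eq_empty_of_forall_notMem fun u hu ↦
      (mem_boundaryNeighbors.1 hu).2.2 ⟨hvR, hNR hu⟩
  · rw [coeff_add_indicatorExponent_add_single_card_mul_prod _
      disjoint_interiorNeighbors_boundaryNeighbors
      notMem_interiorNeighbors_union_boundaryNeighbors (h.eq_zero_of_notMem (by simp)) hηN]
    exact mul_ne_zero (pow_ne_zero _ (by norm_num)) h.coeff_ne_zero

lemma IsNice.of_exchange_covered {θ : V →₀ ℕ} {w r j : V}
    (h : IsNice G (S \ {v}) (peel G S B v) (R \ {v}) M (θ + Finsupp.single w 1)) (hv : v ∈ B)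
    (hRB : R ⊆ B) (hBS : B ⊆ S) (hr : r ∈ R) (hwr : w ≠ r)
    (hN : boundaryNeighbors G B R v = {w, r}) (hj : j ∈ interiorNeighbors G S B v)
    (hjM : j ∈ M.verts)
    (hcoeff : coeff (θ + Finsupp.single j 1)
      (graphPoly (reducedGraph G (S \ {v}) (R \ {v}) M)) ≠ 0) :
    IsNice G S B R M (θ + Finsupp.single j 1 +
      indicatorExponent (insert w (interiorNeighbors G S B v)) + Finsupp.single v 1) := by
  set U := interiorNeighbors G S B v with hU
  have hvN : v ∉ U ∪ {w, r} := hN ▸ notMem_interiorNeighbors_union_boundaryNeighbors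
  have hUN : Disjoint U {w, r} := hN ▸ disjoint_interiorNeighbors_boundaryNeighbors
  have hUB : ∀ u ∈ U, u ∉ B := fun u hu ↦ (mem_interiorNeighbors.1 hu).2.2
  have hjN : j ∉ ({w, r} : Finset V) := disjoint_left.1 hUN hj
  have hw : G.Adj v w ∧ w ∈ B ∧ ¬(v ∈ R ∧ w ∈ R) := mem_boundaryNeighbors.1 (by simp [hN])
  have hvr : G.Adj v r ∧ r ∈ B ∧ ¬(v ∈ R ∧ r ∈ R) := mem_boundaryNeighbors.1 (by simp [hN])
  have hθv : (θ + Finsupp.single w 1 : V →₀ ℕ) v = 0 := h.eq_zero_of_notMem (by simp)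
  have hθr : (θ + Finsupp.single w 1 : V →₀ ℕ) r = 0 := h.eq_zero r ⟨hr, hvr.1.ne'⟩
  have hθj := h.le_one j (mem_peel_of_mem_interiorNeighbors hj) hjM
  simp only [Finsupp.add_apply, Finsupp.single_apply] at hθv hθr hθj
  refine h.of_coeff_mul_prod_ne_zero hv hRB hBS ?_ (fun hvR ↦ absurd ⟨hvR, hr⟩ hvr.2.2) ?_ ?_ ?_
  · simp only [Finsupp.add_apply, indicatorExponent_apply, Finsupp.single_apply]
    grind
  · intro u hu huv
    simp only [Finsupp.add_apply, indicatorExponent_apply, Finsupp.single_apply]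
    grind
  · intro u hu
    have hθu₃ := h.le_three u
    have hθu₂ := fun hu : u ∈ U ↦ h.le_two u (mem_peel_of_mem_interiorNeighbors hu)
    simp only [Finsupp.add_apply, indicatorExponent_apply, Finsupp.single_apply] at hθu₂ hθu₃ ⊢
    grind
  · rw [hN, ← hU, show U ∪ {w, r} = insert w U ∪ {r} by grind, ← card_singleton r,
      coeff_add_indicatorExponent_add_single_card_mul_prod _ (by grind [disjoint_right])
        (by grind) (by grind [Finsupp.add_apply])
        (by grind [Finsupp.add_apply])]
    exact mul_ne_zero (pow_ne_zero _ (by norm_num)) hcoeff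

/-- Matching `v` to an uncovered interior neighbour `j` removes the factor `x_v - x_j`. -/
lemma IsNice.sup_subgraphOfAdj
    (h : IsNice G (S \ {v}) (peel G S B v) (R \ {v}) M η) (hv : v ∈ B) (hRB : R ⊆ B) (hBS : B ⊆ S)
    (hvR : v ∉ R) {j : V} (hj : j ∈ interiorNeighbors G S B v) (hjM : j ∉ M.verts)
    (hcoeff : coeff (η + indicatorExponent (insert v (interiorNeighbors G S B v)))
      (graphPoly (reducedGraph G (S \ {v}) (R \ {v}) M) *
        ∏ u ∈ (interiorNeighbors G S B v ∪ boundaryNeighbors G B R v).erase j,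
          (X v - X u)) ≠ 0) :
    IsNice G S B R (M ⊔ G.subgraphOfAdj (mem_interiorNeighbors.1 hj).1)
      (η + indicatorExponent (insert v (interiorNeighbors G S B v))) := by
  obtain ⟨hvj, hjS, hjB⟩ := mem_interiorNeighbors.1 hj
  have hvM : v ∉ M.verts := fun hvM ↦ (h.verts_subset hvM).1.2 rfl
  have hηv : η v = 0 := h.eq_zero_of_notMem (by simp)
  have hη' (u : V) : (η + indicatorExponent (insert v (interiorNeighbors G S B v)) : V →₀ ℕ) u =
      η u + if u = v ∨ u ∈ interiorNeighbors G S B v then 1 else 0 := by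
    simp [indicatorExponent_apply]
  have hverts : (M ⊔ G.subgraphOfAdj hvj).verts = M.verts ∪ {v, j} := rfl
  have hUpeel (u : V) : u ∈ interiorNeighbors G S B v → u ∈ peel G S B v :=
    mem_peel_of_mem_interiorNeighbors
  have hUB (u : V) (hu : u ∈ interiorNeighbors G S B v) : u ∉ B := (mem_interiorNeighbors.1 hu).2.2
  have hpeel {u : V} (hu : u ∈ B) (huv : u ≠ v) : u ∈ peel G S B v := ⟨.inl hu, huv⟩
  refine ⟨?_, ?_, ?_, ?_, ?_, ?_, coeff_ne_zero_of_associated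
    (associated_graphPoly_reducedGraph (M := M) ?_
      fun u ↦ reducedGraph_sup_subgraphOfAdj_adj_iff_mem hv hRB hBS hvM hvj) hcoeff⟩
  · refine h.isMatching.sup (SimpleGraph.Subgraph.IsMatching.subgraphOfAdj hvj) ?_
    rw [h.isMatching.support_eq_verts,
      (SimpleGraph.Subgraph.IsMatching.subgraphOfAdj hvj).support_eq_verts]
    simp [hvM, hjM]
  · have := h.verts_subset
    rw [hverts]
    grind
  · have := h.eq_zero
    grind
  · have := h.le_one
    grind
  · have := h.le_two
    grind
  · intro u
    have := h.le_two u
    have := h.le_three u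
    grind
  · simp only [SimpleGraph.Subgraph.sup_adj, SimpleGraph.subgraphOfAdj_adj]
    grind

lemma IsNice.of_exchange_not_covered {θ : V →₀ ℕ} {w r j : V}
    (h : IsNice G (S \ {v}) (peel G S B v) (R \ {v}) M (θ + Finsupp.single w 1)) (hv : v ∈ B)
    (hRB : R ⊆ B) (hBS : B ⊆ S) (hr : r ∈ R) (hwr : w ≠ r)
    (hN : boundaryNeighbors G B R v = {w, r}) (hj : j ∈ interiorNeighbors G S B v)
    (hjM : j ∉ M.verts)
    (hcoeff : coeff (θ + Finsupp.single j 1)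
      (graphPoly (reducedGraph G (S \ {v}) (R \ {v}) M)) ≠ 0) :
    IsNice G S B R (M ⊔ G.subgraphOfAdj (mem_interiorNeighbors.1 hj).1)
      (θ + Finsupp.single w 1 + indicatorExponent (insert v (interiorNeighbors G S B v))) := by
  set U := interiorNeighbors G S B v with hU
  have hvN : v ∉ U ∪ {w, r} := hN ▸ notMem_interiorNeighbors_union_boundaryNeighbors
  have hUN : Disjoint U {w, r} := hN ▸ disjoint_interiorNeighbors_boundaryNeighbors
  have hvr : G.Adj v r ∧ r ∈ B ∧ ¬(v ∈ R ∧ r ∈ R) := mem_boundaryNeighbors.1 (by simp [hN])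
  have hθv : (θ + Finsupp.single w 1 : V →₀ ℕ) v = 0 := h.eq_zero_of_notMem (by simp)
  have hθr : (θ + Finsupp.single w 1 : V →₀ ℕ) r = 0 := h.eq_zero r ⟨hr, hvr.1.ne'⟩
  have hexp : θ + Finsupp.single w 1 + indicatorExponent (insert v U) =
      θ + Finsupp.single j 1 + indicatorExponent (insert w (U.erase j)) +
        Finsupp.single v #{r} := by
    rw [indicatorExponent_insert (by grind), indicatorExponent_insert (by grind),
      ← insert_erase hj, indicatorExponent_insert (by simp), insert_erase hj, card_singleton]
    abel
  refine h.sup_subgraphOfAdj hv hRB hBS (fun hvR ↦ hvr.2.2 ⟨hvR, hr⟩) hj hjM ?_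
  rw [hexp, hN, ← hU, show (U ∪ {w, r}).erase j = insert w (U.erase j) ∪ {r} by
    grind [disjoint_left], coeff_add_indicatorExponent_add_single_card_mul_prod _
    (by grind [disjoint_right]) (by grind) (by grind [Finsupp.add_apply])
    (by grind [Finsupp.add_apply])]
  exact mul_ne_zero (pow_ne_zero _ (by norm_num)) hcoeff

lemma IsNice.exists_of_boundaryNeighbors_eq_pair {w r : V}
    (h : IsNice G (S \ {v}) (peel G S B v) (R \ {v}) M η) (hv : v ∈ B) (hRB : R ⊆ B) (hBS : B ⊆ S)
    (hr : r ∈ R) (hwr : w ≠ r) (hN : boundaryNeighbors G B R v = {w, r}) :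
    ∃ M' η', IsNice G S B R M' η' := by
  set U := interiorNeighbors G S B v with hU
  have hηv : η v = 0 := h.eq_zero_of_notMem (by simp)
  have hvN : v ∉ U ∪ {w, r} := hN ▸ notMem_interiorNeighbors_union_boundaryNeighbors
  have hUN : Disjoint U {w, r} := hN ▸ disjoint_interiorNeighbors_boundaryNeighbors
  have hvQ : v ∉ (graphPoly (reducedGraph G (S \ {v}) (R \ {v}) M)).vars := fun hvQ ↦
    (support_reducedGraph_subset (mem_support_of_mem_vars_graphPoly hvQ)).2 rfl
  have hvR : v ∉ R := by
    have : r ∈ boundaryNeighbors G B R v := by simp [hN]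
    grind [mem_boundaryNeighbors]
  by_cases hzero : coeff (η + Finsupp.single v 1 + indicatorExponent U)
      (graphPoly (reducedGraph G (S \ {v}) (R \ {v}) M) * ∏ u ∈ insert w U, (X v - X u)) = 0
  · obtain ⟨θ, rfl, j, hj, hθj⟩ := exists_coeff_exchange_ne_zero hvQ (by grind)
      (by grind [disjoint_right]) hηv h.coeff_ne_zero hzero
    by_cases hjM : j ∈ M.verts
    · exact ⟨M, _, h.of_exchange_covered hv hRB hBS hr hwr hN hj hjM hθj⟩
    · exact ⟨_, _, h.of_exchange_not_covered hv hRB hBS hr hwr hN hj hjM hθj⟩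
  · have hrU : r ∉ insert w U := by grind [disjoint_right]
    have hvr : v ≠ r := fun hvr ↦ hvR (hvr ▸ hr)
    have hηr : (η + Finsupp.single v 1 + indicatorExponent U : V →₀ ℕ) r = 0 := by
      have : r ∉ U := by grind
      simp [indicatorExponent_apply, h.eq_zero r ⟨hr, hvr.symm⟩, this, hvr]
    refine ⟨M, _, h.of_coeff_add_indicatorExponent_add_single_ne_zero hv hRB hBS le_rfl
      (absurd · hvR) ?_⟩
    rwa [hN, ← hU, show U ∪ {w, r} = insert r (insert w U) by grind, prod_insert hrU,
      mul_comm (X v - X r), ← mul_assoc, Finsupp.single_add v 1 1, ← add_assoc, add_right_comm η,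
      coeff_add_single_left_mul_X_sub_X _ hvr hηr]

end NicePairs

section Separations

variable {V : Type*} {G : SimpleGraph V} {S S₁ S₂ X : Set V}

/-- A separation of `G[S]` into two proper parts `S₁` and `S₂` that overlap in `X`. -/
structure IsSeparation (G : SimpleGraph V) (S S₁ S₂ X : Set V) : Prop where
  union_eq : S₁ ∪ S₂ = S
  inter_eq : S₁ ∩ S₂ = X
  left_ssubset : S₁ ⊂ S
  right_ssubset : S₂ ⊂ S
  not_adj : ∀ a ∈ S₁ \ X, ∀ b ∈ S₂ \ X, ¬G.Adj a b

lemma IsSeparation.symm (h : IsSeparation G S S₁ S₂ X) : IsSeparation G S S₂ S₁ X where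
  union_eq := Set.union_comm S₂ S₁ ▸ h.union_eq
  inter_eq := Set.inter_comm S₂ S₁ ▸ h.inter_eq
  left_ssubset := h.right_ssubset
  right_ssubset := h.left_ssubset
  not_adj a ha b hb hab := h.not_adj b hb a ha hab.symm

lemma exists_isSeparation_of_not_preconnected (hX : X ⊆ S)
    (h : ¬(G.induce (S \ X)).Preconnected) : ∃ S₁ S₂, IsSeparation G S S₁ S₂ X := by
  simp only [SimpleGraph.Preconnected, not_forall] at h
  obtain ⟨p, q, hpq⟩ := h
  let C : Set V := {u | ∃ hu : u ∈ S \ X, (G.induce (S \ X)).Reachable p ⟨u, hu⟩}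
  have hCS : C ⊆ S \ X := fun _ ⟨hu, _⟩ ↦ hu
  have hpC : p.1 ∈ C := ⟨p.2, .refl p⟩
  have hqC : q.1 ∉ C := fun ⟨_, hq⟩ ↦ hpq hq
  refine ⟨X ∪ C, S \ C, by grind, by grind, ⟨by grind, fun h ↦ ?_⟩, ⟨Set.sdiff_subset, fun h ↦ ?_⟩,
    fun a ha b hb hab ↦ ?_⟩
  · exact (h q.2.1).elim q.2.2 hqC
  · exact (h p.2.1).2 hpC
  · obtain ⟨haSX, hpa⟩ : a ∈ C := ha.1.resolve_left ha.2
    have hbSX : b ∈ S \ X := ⟨hb.1.1, hb.2⟩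
    have hab' : (G.induce (S \ X)).Adj ⟨a, haSX⟩ ⟨b, hbSX⟩ := hab
    exact hb.1.2 ⟨hbSX, hpa.trans hab'.reachable⟩

lemma IsSeparation.subset_or_subset_of_isClique (h : IsSeparation G S S₁ S₂ X) {K : Set V}
    (hK : G.IsClique K) (hKS : K ⊆ S) : K ⊆ S₁ ∨ K ⊆ S₂ := by
  by_contra! hK₁₂
  obtain ⟨⟨b, hbK, hb₁⟩, ⟨a, haK, ha₂⟩⟩ :=
    And.intro (Set.not_subset.1 hK₁₂.1) (Set.not_subset.1 hK₁₂.2)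
  have ha : a ∈ S₁ \ X := by grind [h.union_eq, h.inter_eq]
  have hb : b ∈ S₂ \ X := by grind [h.union_eq, h.inter_eq]
  exact h.not_adj a ha b hb (hK haK hbK fun hab ↦ hb₁ (hab ▸ ha.1))

variable {R : Set V} {M₁ M₂ : G.Subgraph}

lemma IsSeparation.reducedGraph_sup (h : IsSeparation G S S₁ S₂ X) (hR : R ⊆ S₁)
    (hM₁ : M₁.verts ⊆ S₁) (hM₂ : M₂.verts ⊆ S₂ \ X) :
    reducedGraph G S R (M₁ ⊔ M₂) = reducedGraph G S₁ R M₁ ⊔ reducedGraph G S₂ X M₂ := by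
  have hS := h.union_eq
  have hX := h.inter_eq
  have hadj := h.not_adj
  ext a b
  have hab : G.Adj a b → G.Adj b a := SimpleGraph.Adj.symm
  have hab₁ : M₁.Adj a b → a ∈ M₁.verts ∧ b ∈ M₁.verts := fun h ↦ ⟨h.fst_mem, h.snd_mem⟩
  have hab₂ : M₂.Adj a b → a ∈ M₂.verts ∧ b ∈ M₂.verts := fun h ↦ ⟨h.fst_mem, h.snd_mem⟩
  simp only [reducedGraph, SimpleGraph.sup_adj, SimpleGraph.Subgraph.sup_adj]
  grind

lemma IsSeparation.disjoint_reducedGraph (h : IsSeparation G S S₁ S₂ X) :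
    Disjoint (reducedGraph G S₁ R M₁) (reducedGraph G S₂ X M₂) := by
  rw [SimpleGraph.disjoint_left]
  exact fun a b h₁ h₂ ↦
    h₂.2.2.2.1 ⟨h.inter_eq ▸ ⟨h₁.2.1, h₂.2.1⟩, h.inter_eq ▸ ⟨h₁.2.2.1, h₂.2.2.1⟩⟩

variable [Fintype V] [LinearOrder V] {B : Set V} {η₁ η₂ : V →₀ ℕ}

lemma IsNice.glue (h : IsSeparation G S S₁ S₂ X) (hBS : B ⊆ S) (hR : R ⊆ S₁)
    (h₁ : IsNice G S₁ (B ∩ S₁) R M₁ η₁) (h₂ : IsNice G S₂ (B ∩ S₂) X M₂ η₂) :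
    IsNice G S B R (M₁ ⊔ M₂) (η₁ + η₂) := by
  have hS := h.union_eq
  have hX := h.inter_eq
  have hM₁ := h₁.verts_subset
  have hM₂ := h₂.verts_subset
  have hη₁ (u : V) (hu : u ∉ S₁) : η₁ u = 0 := h₁.eq_zero_of_notMem hu
  have hη₂ (u : V) (hu : u ∈ S₁) : η₂ u = 0 := by
    have := h₂.eq_zero u
    have := h₂.eq_zero_of_notMem (u := u)
    grind
  have hverts : (M₁ ⊔ M₂).verts = M₁.verts ∪ M₂.verts := rfl
  refine ⟨h₁.isMatching.sup h₂.isMatching ?_, ?_, fun u ↦ ?_, fun u ↦ ?_, fun u ↦ ?_, fun u ↦ ?_,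
    ?_⟩
  · rw [h₁.isMatching.support_eq_verts, h₂.isMatching.support_eq_verts, Set.disjoint_left]
    grind
  · grind
  · have := h₁.eq_zero u
    grind [Finsupp.add_apply]
  · have := h₁.le_one u
    have := h₂.le_one u
    grind [Finsupp.add_apply]
  · have := h₁.le_two u
    have := h₂.le_two u
    grind [Finsupp.add_apply]
  · by_cases hu : u ∈ S₁
    · simpa [hη₂ u hu] using h₁.le_three u
    · simpa [hη₁ u hu] using h₂.le_three u
  · obtain ⟨d, hd⟩ := isHomogeneous_graphPoly (reducedGraph G S₂ X M₂)
    rw [h.reducedGraph_sup hR (by grind) hM₂, graphPoly_sup h.disjoint_reducedGraph,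
      coeff_add_mul_of_isHomogeneous hd h₁.coeff_ne_zero h₂.coeff_ne_zero]
    · exact mul_ne_zero h₁.coeff_ne_zero h₂.coeff_ne_zero
    · exact fun u hu ↦ hη₂ u (support_reducedGraph_subset (mem_support_of_mem_vars_graphPoly hu))

end Separations

section OuterConfigurations

variable {V W : Type*} {G : SimpleGraph V} {H : SimpleGraph W} {φ : SimpleGraph.Copy G H}
  {A : Set W} {S S' B B' R R' : Set V} {v : V}

/-- The hypothesis under which a matching and an exponent are constructed for `G[S]`: in the graph
`H` containing `G`, contracting the connected set `A` gives a vertex outside `S` that sees all of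
`B`. For planar `H` this encodes that `B` lies on the outer face of `G[S]`. The set `R` of roots
is a clique in `B`. -/
structure IsOuterConfiguration (φ : SimpleGraph.Copy G H) (A : Set W) (S B R : Set V) : Prop where
  roots_subset : R ⊆ B
  outer_subset : B ⊆ S
  isClique : G.IsClique R
  connected : (H.induce A).Connected
  disjoint : Disjoint A (φ '' S)
  setAdj : ∀ b ∈ B, SetAdj H A {φ b}

lemma IsOuterConfiguration.mono (h : IsOuterConfiguration φ A S B R) (hS : S' ⊆ S)
    (hB : B' ⊆ B) (hBS : B' ⊆ S') (hR' : R' ⊆ B') (hR : G.IsClique R') :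
    IsOuterConfiguration φ A S' B' R' where
  roots_subset := hR'
  outer_subset := hBS
  isClique := hR
  connected := h.connected
  disjoint := h.disjoint.mono_right (Set.image_mono hS)
  setAdj b hb := h.setAdj b (hB hb)

lemma disjoint_singleton_image_sdiff : Disjoint {φ v} (φ '' (S \ {v})) :=
  Set.disjoint_singleton_left.2 fun ⟨_, hu, huv⟩ ↦ hu.2 (φ.injective huv)

lemma IsOuterConfiguration.peel (h : IsOuterConfiguration φ A S B R) (hv : v ∈ B) :
    IsOuterConfiguration φ (A ∪ {φ v}) (S \ {v}) (peel G S B v) (R \ {v}) where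
  roots_subset u hu := ⟨.inl (h.roots_subset hu.1), hu.2⟩
  outer_subset u hu := ⟨hu.1.elim (fun hu ↦ h.outer_subset hu) And.left, hu.2⟩
  isClique := h.isClique.subset Set.sdiff_subset
  connected := by
    obtain ⟨p, hp, q, hq, hpq⟩ := h.setAdj v hv
    exact SimpleGraph.connected_induce_union h.connected.preconnected
      (connected_induce_singleton _).preconnected hp hq hpq
  disjoint := Set.disjoint_union_left.2
    ⟨h.disjoint.mono_right (Set.image_mono Set.sdiff_subset), disjoint_singleton_image_sdiff⟩
  setAdj b hb := hb.1.elim (fun hb ↦ (h.setAdj b hb).mono Set.subset_union_left subset_rfl)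
    fun hb ↦ ⟨φ v, .inr rfl, φ b, rfl, φ.toHom.map_adj hb.2⟩

lemma isOuterConfiguration_singleton (φ : SimpleGraph.Copy G H) (S : Set V) (v : V) :
    IsOuterConfiguration φ {φ v} (S \ {v}) (peel G S {v} v) ∅ where
  roots_subset := Set.empty_subset _
  outer_subset _ hu := ⟨(hu.1.resolve_left hu.2).1, hu.2⟩
  isClique := SimpleGraph.isClique_empty
  connected := connected_induce_singleton _
  disjoint := disjoint_singleton_image_sdiff
  setAdj _ hb := setAdj_singleton.2 (φ.toHom.map_adj (hb.1.resolve_left hb.2).2)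

lemma preconnected_induce_image (φ : SimpleGraph.Copy G H) (h : (G.induce S).Preconnected) :
    (H.induce (φ '' S)).Preconnected :=
  h.map (SimpleGraph.induceHom φ.toHom (Set.mapsTo_image φ S)) <|
    Set.surjective_mapsTo_image_restrict φ S

variable [Fintype V]

lemma IsOuterConfiguration.card_boundaryNeighbors_le_two (h : IsOuterConfiguration φ A S B R)
    (hH : H.IsPlanar) (hv : v ∈ B)
    (hpre : ∀ x ∈ B, G.Adj v x → (G.induce (S \ {v, x})).Preconnected) :
    #(boundaryNeighbors G B R v) ≤ 2 := by
  by_contra! hcard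
  obtain ⟨x, hx⟩ := Function.Embedding.exists_of_card_le_finset (α := Fin 3)
    (s := boundaryNeighbors G B R v) (by simpa)
  have hxN (i : Fin 3) : G.Adj v (x i) ∧ x i ∈ B :=
    have hi := mem_boundaryNeighbors.1 (hx ⟨i, rfl⟩)
    ⟨hi.1, hi.2.1⟩
  refine not_isPlanar_of_common_neighbors (A₁ := A) (A₂ := {φ v}) (T := φ '' (S \ {v}))
    (x := fun i ↦ φ (x i)) (φ.injective.comp x.injective) ?_ ?_ h.connected
    (connected_induce_singleton _) ?_ ?_ disjoint_singleton_image_sdiff (h.setAdj v hv)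
    (fun i ↦ h.setAdj _ (hxN i).2) (fun i ↦ setAdj_singleton.2 (φ.toHom.map_adj (hxN i).1)) hH
  · exact fun i ↦ Set.mem_image_of_mem φ ⟨h.outer_subset (hxN i).2, (hxN i).1.ne'⟩
  · intro i
    rw [← Set.image_singleton, ← Set.image_sdiff (show Function.Injective φ from φ.injective),
      Set.sdiff_sdiff, Set.singleton_union]
    exact preconnected_induce_image φ (hpre _ (hxN i).2 (hxN i).1)
  · exact h.disjoint.mono_right (Set.singleton_subset_iff.2 <|
      Set.mem_image_of_mem φ (h.outer_subset hv))
  · exact h.disjoint.mono_right (Set.image_mono Set.sdiff_subset)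

variable [LinearOrder V]

/-- The induction claim for `S`: every outer configuration on `S` has a matching and an exponent. -/
def HasNicePairs (φ : SimpleGraph.Copy G H) (S : Set V) : Prop :=
  ∀ A B R, IsOuterConfiguration φ A S B R → ∃ M η, IsNice G S B R M η

lemma IsOuterConfiguration.exists_isNice_of_isSeparation {S₁ S₂ X : Set V}
    (h : IsOuterConfiguration φ A S B R) (hsep : IsSeparation G S S₁ S₂ X) (hXB : X ⊆ B)
    (hX : G.IsClique X) (ih₁ : HasNicePairs φ S₁) (ih₂ : HasNicePairs φ S₂) :
    ∃ M η, IsNice G S B R M η := by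
  wlog hR : R ⊆ S₁ generalizing S₁ S₂
  · exact this hsep.symm ih₂ ih₁ ((hsep.subset_or_subset_of_isClique h.isClique
      (h.roots_subset.trans h.outer_subset)).resolve_left hR)
  have hXS₂ : X ⊆ S₂ := hsep.inter_eq ▸ Set.inter_subset_right
  obtain ⟨M₁, η₁, h₁⟩ := ih₁ A (B ∩ S₁) R (h.mono hsep.left_ssubset.subset Set.inter_subset_left
    Set.inter_subset_right (Set.subset_inter h.roots_subset hR) h.isClique)
  obtain ⟨M₂, η₂, h₂⟩ := ih₂ A (B ∩ S₂) X (h.mono hsep.right_ssubset.subset Set.inter_subset_left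
    Set.inter_subset_right (Set.subset_inter hXB hXS₂) hX)
  exact ⟨_, _, h₁.glue hsep h.outer_subset hR h₂⟩

lemma IsOuterConfiguration.exists_isNice_of_adj (h : IsOuterConfiguration φ A S B R)
    (hH : H.IsPlanar) (ih : ∀ S' ⊂ S, HasNicePairs φ S') (hv : v ∈ B) (hvR : v ∉ R) {r : V}
    (hr : r ∈ R) (hvr : G.Adj v r)
    (hpre : ∀ x ∈ B, G.Adj v x → (G.induce (S \ {v, x})).Preconnected) :
    ∃ M η, IsNice G S B R M η := by
  obtain ⟨M, η, hM⟩ :=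
    ih _ (Set.sdiff_singleton_ssubset.2 (h.outer_subset hv)) _ _ _ (h.peel hv)
  have hcard := h.card_boundaryNeighbors_le_two hH hv hpre
  by_cases hNR : ↑(boundaryNeighbors G B R v) ⊆ R
  · exact ⟨M, hM.exists_of_boundaryNeighbors_subset hv h.roots_subset h.outer_subset hcard hNR⟩
  · obtain ⟨w, hwN, hwR⟩ := Set.not_subset.1 hNR
    have hwr : w ≠ r := fun hwr ↦ hwR (hwr ▸ hr)
    have hrN : r ∈ boundaryNeighbors G B R v :=
      mem_boundaryNeighbors.2 ⟨hvr, h.roots_subset hr, fun h ↦ hvR h.1⟩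
    have hN : boundaryNeighbors G B R v = {w, r} :=
      (eq_of_subset_of_card_le (insert_subset hwN (singleton_subset_iff.2 hrN))
        (hcard.trans_eq (card_pair hwr).symm)).symm
    exact hM.exists_of_boundaryNeighbors_eq_pair hv h.roots_subset h.outer_subset hr hwr hN

lemma IsOuterConfiguration.exists_isNice_of_nonempty (h : IsOuterConfiguration φ A S B R)
    (hH : H.IsPlanar) (ih : ∀ S' ⊂ S, HasNicePairs φ S') (hR : R.Nonempty) :
    ∃ M η, IsNice G S B R M η := by
  obtain ⟨r, hr⟩ := hR
  by_cases hN : boundaryNeighbors G B R r = ∅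
  · have hrB := h.roots_subset hr
    obtain ⟨M, η, hM⟩ :=
      ih _ (Set.sdiff_singleton_ssubset.2 (h.outer_subset hrB)) _ _ _ (h.peel hrB)
    exact ⟨M, hM.exists_of_boundaryNeighbors_subset hrB h.roots_subset h.outer_subset
      (by simp [hN]) (by simp [hN])⟩
  · obtain ⟨v, hrv, hv, hvR⟩ :
        ∃ v, G.Adj r v ∧ v ∈ B ∧ ¬(r ∈ R ∧ v ∈ R) := by
      obtain ⟨v, hv⟩ := nonempty_iff_ne_empty.2 hN
      exact ⟨v, mem_boundaryNeighbors.1 hv⟩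
    by_cases hpre : ∀ x ∈ B, G.Adj v x → (G.induce (S \ {v, x})).Preconnected
    · exact h.exists_isNice_of_adj hH ih hv (fun hvR' ↦ hvR ⟨hr, hvR'⟩) hr hrv.symm hpre
    · push Not at hpre
      obtain ⟨x, hx, hvx, hdisconn⟩ := hpre
      have hXB : {v, x} ⊆ B := Set.pair_subset hv hx
      obtain ⟨S₁, S₂, hsep⟩ :=
        exists_isSeparation_of_not_preconnected (hXB.trans h.outer_subset) hdisconn
      exact h.exists_isNice_of_isSeparation hsep hXB (SimpleGraph.isClique_pair.2 fun _ ↦ hvx)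
        (ih _ hsep.left_ssubset) (ih _ hsep.right_ssubset)

lemma isNice_empty : IsNice G ∅ ∅ ∅ ⊥ 0 where
  isMatching _ h := h.elim
  verts_subset := Set.empty_subset _
  eq_zero := by simp
  le_one := by simp
  le_two := by simp
  le_three := by simp
  coeff_ne_zero := by simp [graphPoly, reducedGraph]

lemma exists_isNice_empty_outer (φ : SimpleGraph.Copy G H) (ih : ∀ S' ⊂ S, HasNicePairs φ S')
    (hS : S.Nonempty) : ∃ M η, IsNice G S ∅ ∅ M η := by
  obtain ⟨r, hr⟩ := hS
  obtain ⟨M, η, hM⟩ := ih _ (Set.sdiff_singleton_ssubset.2 hr) _ _ _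
    (isOuterConfiguration_singleton φ S r)
  have hM' : IsNice G (S \ {r}) (peel G S {r} r) ({r} \ {r}) M η := by rwa [Set.sdiff_self]
  have hN : boundaryNeighbors G {r} {r} r = ∅ := by simp [boundaryNeighbors]
  obtain ⟨η', hη'⟩ := hM'.exists_of_boundaryNeighbors_subset rfl subset_rfl
    (Set.singleton_subset_iff.2 hr) (by simp [hN]) (by simp [hN])
  exact ⟨M, η', hη'.of_singleton_root (Set.empty_subset _)⟩

lemma hasNicePairs (φ : SimpleGraph.Copy G H) (hH : H.IsPlanar) (S : Set V) :
    HasNicePairs φ S := by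
  induction S using WellFoundedLT.induction with
  | ind S ih =>
    intro A B R h
    rcases R.eq_empty_or_nonempty with rfl | hR
    · rcases B.eq_empty_or_nonempty with rfl | ⟨r, hr⟩
      · rcases S.eq_empty_or_nonempty with rfl | hS
        · exact ⟨_, _, isNice_empty⟩
        · exact exists_isNice_empty_outer φ ih hS
      · have hroot : IsOuterConfiguration φ A S B {r} := h.mono subset_rfl subset_rfl
          h.outer_subset (Set.singleton_subset_iff.2 hr) (SimpleGraph.isClique_singleton r)
        obtain ⟨M, η, hM⟩ := hroot.exists_isNice_of_nonempty hH ih (Set.singleton_nonempty r)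
        exact ⟨M, η, hM.of_singleton_root subset_rfl⟩
    · exact h.exists_isNice_of_nonempty hH ih hR

end OuterConfigurations

section OuterBoundary

variable {V : Type*} {G : SimpleGraph V} {B : Set V}

lemma addApex_adj_some_some {u v : V} : (addApex G B).Adj (some u) (some v) ↔ G.Adj u v := by
  simp only [addApex, SimpleGraph.fromRel_adj, ne_eq, Option.some.injEq, G.adj_comm v u, or_self,
    and_iff_right_iff_imp]
  exact SimpleGraph.Adj.ne

lemma addApex_adj_none_some {v : V} : (addApex G B).Adj none (some v) ↔ v ∈ B := by
  simp [addApex]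

/-- The graph `G` inside `addApex G B`. -/
def copyAddApex (G : SimpleGraph V) (B : Set V) : SimpleGraph.Copy G (addApex G B) where
  toHom := ⟨some, addApex_adj_some_some.2⟩
  injective' := Option.some_injective V

lemma isOuterConfiguration_copyAddApex {R : Set V} (hRB : R ⊆ B) (hR : G.IsClique R) :
    IsOuterConfiguration (copyAddApex G B) {none} Set.univ B R where
  roots_subset := hRB
  outer_subset := Set.subset_univ B
  isClique := hR
  connected := connected_induce_singleton _
  disjoint := Set.disjoint_singleton_left.2 fun ⟨_, _, hu⟩ ↦ Option.some_ne_none _ hu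
  setAdj _ hb := setAdj_singleton.2 (addApex_adj_none_some.2 hb)

lemma reducedGraph_univ_pair (v₁ v₂ : V) (M : G.Subgraph) :
    reducedGraph G Set.univ {v₁, v₂} M =
      (G.deleteEdges {s(v₁, v₂)}).deleteEdges M.edgeSet := by
  ext a b
  simp only [reducedGraph, SimpleGraph.deleteEdges_adj, SimpleGraph.Subgraph.mem_edgeSet,
    Set.mem_singleton_iff, Sym2.eq_iff, Set.mem_insert_iff, Set.mem_univ, true_and, and_assoc]
  grind [SimpleGraph.Adj.ne]

open scoped Classical in
theorem stmt_10_general [Fintype V] [LinearOrder V] {v₁ v₂ : V} (he : G.Adj v₁ v₂)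
    (hv₁ : v₁ ∈ B) (hv₂ : v₂ ∈ B) (hplane : (addApex G B).IsPlanar) :
    ∃ M : G.Subgraph, M.IsMatching ∧ v₁ ∉ M.verts ∧ v₂ ∉ M.verts ∧
      ∃ η : V →₀ ℕ,
        η v₁ = 0 ∧ η v₂ = 0 ∧
        (∀ v ∈ B, v ≠ v₁ → v ≠ v₂ → η v ≤ 2 - (if v ∈ M.verts then 1 else 0)) ∧
        (∀ v, v ∉ B → η v ≤ 3) ∧
        coeff η (graphPoly ((G.deleteEdges {s(v₁, v₂)}).deleteEdges M.edgeSet)) ≠ 0 := by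
  obtain ⟨M, η, hM⟩ := hasNicePairs (copyAddApex G B) hplane Set.univ _ _ _
    (isOuterConfiguration_copyAddApex (Set.pair_subset hv₁ hv₂)
      (SimpleGraph.isClique_pair.2 fun _ ↦ he))
  refine ⟨M, hM.isMatching, fun h ↦ (hM.verts_subset h).2 (.inl rfl),
    fun h ↦ (hM.verts_subset h).2 (.inr rfl), η, hM.eq_zero v₁ (.inl rfl),
    hM.eq_zero v₂ (.inr rfl), fun v hv _ _ ↦ ?_, fun v _ ↦ hM.le_three v, ?_⟩
  · split_ifs with hvM
    · exact hM.le_one v hv hvM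
    · exact hM.le_two v hv
  · exact reducedGraph_univ_pair v₁ v₂ M ▸ hM.coeff_ne_zero

end OuterBoundary

/- For a plane graph `G` whose outer boundary is a cycle `C` containing the edge
`e = v₁v₂` (the boundary vertices are those of `C`, and they all lie on a common face,
encoded by planarity of `G` plus an apex joined to the boundary), there is a matching
`M` avoiding `v₁, v₂` and an exponent `η` with `η v₁ = η v₂ = 0`,
`η v ≤ 2 - d_M(v)` for the other boundary vertices and `η v ≤ 3` for interior
vertices, such that the coefficient of `x^η` in `P_{G - e - M}` is nonzero. -/
open scoped Classical in
theorem stmt_10 {V : Type*} [Fintype V] [LinearOrder V] (G : SimpleGraph V)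
    (v₁ v₂ : V) (he : G.Adj v₁ v₂)
    (C : G.Walk v₁ v₁) (hC : C.IsCycle) (heC : s(v₁, v₂) ∈ C.edges)
    (hplane : (addApex G {v | v ∈ C.support}).IsPlanar) :
    ∃ M : G.Subgraph, M.IsMatching ∧ v₁ ∉ M.verts ∧ v₂ ∉ M.verts ∧
      ∃ η : V →₀ ℕ,
        η v₁ = 0 ∧ η v₂ = 0 ∧
        (∀ v ∈ C.support, v ≠ v₁ → v ≠ v₂ →
          η v ≤ 2 - (if v ∈ M.verts then 1 else 0)) ∧
        (∀ v, v ∉ C.support → η v ≤ 3) ∧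
        MvPolynomial.coeff η
          (graphPoly ((G.deleteEdges {s(v₁, v₂)}).deleteEdges M.edgeSet)) ≠ 0 :=
  stmt_10_general he C.start_mem_support (C.snd_mem_support_of_mem_edges heC) hplane
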